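/- Let σ_n denote the uniform probability measure on the sphere S_n(√n) = {x ∈ ℝ^{n} : ‖x‖ = √n}. Then the pushforward of σ_n under the first-coordinate projection x ↦ x₁ converges weakly (in distribution) to the standard Gaussian measure N(0,1) on ℝ as n → ∞. -/

import Mathlib

open Filter MeasureTheory ProbabilityTheory

/-!
If `μ` and `ν` are rotation invariant on a Euclidean space and `x ∼ μ`, `y ∼ ν` are independent,
then conditioning on `y` shows that `⟪x, y⟫` has the law of `‖y‖ ⟪e, x⟫` for every unit vector `e`,
and conditioning on `x` shows that it has the law of `‖x‖ ⟪e, y⟫`. Hence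
`(‖y‖ / √n) ⟪e, x⟫` and `(‖x‖ / √n) ⟪e, y⟫` are equal in law. When `‖x‖` and `‖y‖` both concentrate
around `√n`, the laws of `⟪e, x⟫` and `⟪e, y⟫` must be close. For `y` standard Gaussian, `⟪e, y⟫` is
exactly `N(0, 1)`, and `‖y‖` concentrates because `‖y‖²` has mean `n` and variance `O(n)`.
-/

open scoped BoundedContinuousFunction NNReal RealInnerProductSpace Topology

section Integral

variable {α β γ : Type*} [MeasurableSpace α] [MeasurableSpace β] [MeasurableSpace γ]

theorem map_prod_eq_of_forall_map_eq {μ : Measure α} {ν : Measure β} [SFinite μ] [SFinite ν]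
    {f g : α × β → γ} (hf : Measurable f) (hg : Measurable g)
    (h : ∀ b, μ.map (fun a => f (a, b)) = μ.map (fun a => g (a, b))) :
    (μ.prod ν).map f = (μ.prod ν).map g := by
  ext s hs
  rw [Measure.map_apply hf hs, Measure.map_apply hg hs, Measure.prod_apply_symm (hf hs),
    Measure.prod_apply_symm (hg hs)]
  refine lintegral_congr fun b => ?_
  calc μ ((fun a => f (a, b)) ⁻¹' s) = μ.map (fun a => f (a, b)) s :=
        (Measure.map_apply (by fun_prop) hs).symm
    _ = μ.map (fun a => g (a, b)) s := by rw [h b]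
    _ = μ ((fun a => g (a, b)) ⁻¹' s) := Measure.map_apply (by fun_prop) hs

theorem integrable_comp_of_lipschitzWith {μ : Measure α} [IsFiniteMeasure μ] {K : ℝ≥0} {f : ℝ → ℝ}
    (hf : LipschitzWith K f) {X : α → ℝ} (hX : Integrable X μ) :
    Integrable (fun a => f (X a)) μ := by
  have hlip : LipschitzWith K fun x => f x - f 0 := by
    simpa using hf.sub (LipschitzWith.const (f 0))
  have hsub : Integrable (fun a => f (X a) - f 0) μ :=
    memLp_one_iff_integrable.1
      (hlip.comp_memLp (by simp) (memLp_one_iff_integrable.2 hX))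
  exact (hsub.add (integrable_const (f 0))).congr (ae_of_all _ fun a => sub_add_cancel _ _)

theorem abs_integral_comp_sub_integral_comp_mul_prod_le {μ : Measure α} [IsFiniteMeasure μ]
    {ν : Measure β} [IsProbabilityMeasure ν] {K : ℝ≥0} {f : ℝ → ℝ} (hf : LipschitzWith K f)
    {X : α → ℝ} (hX : Integrable X μ) {R : β → ℝ} (hR : Integrable R ν) :
    |∫ a, f (X a) ∂μ - ∫ p, f (X p.1 * R p.2) ∂(μ.prod ν)| ≤
      K * ((∫ a, |X a| ∂μ) * ∫ b, |R b - 1| ∂ν) := by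
  have hX₁ : Integrable (fun p => f (X p.1)) (μ.prod ν) :=
    (integrable_comp_of_lipschitzWith hf hX).comp_fst ν
  have hXR : Integrable (fun p => f (X p.1 * R p.2)) (μ.prod ν) :=
    integrable_comp_of_lipschitzWith hf (hX.mul_prod hR)
  have hbound : Integrable (fun p => K * (|X p.1| * |R p.2 - 1|)) (μ.prod ν) :=
    (hX.abs.mul_prod (hR.sub (integrable_const 1)).abs).const_mul _
  have hpoint (p : α × β) : |f (X p.1) - f (X p.1 * R p.2)| ≤ K * (|X p.1| * |R p.2 - 1|) := by
    calc |f (X p.1) - f (X p.1 * R p.2)| ≤ K * |X p.1 - X p.1 * R p.2| := by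
          simpa only [Real.dist_eq] using hf.dist_le_mul (X p.1) (X p.1 * R p.2)
      _ = K * (|X p.1| * |R p.2 - 1|) := by
          rw [← abs_mul, ← abs_neg]
          ring_nf
  calc |∫ a, f (X a) ∂μ - ∫ p, f (X p.1 * R p.2) ∂(μ.prod ν)|
      = |∫ p, (f (X p.1) - f (X p.1 * R p.2)) ∂(μ.prod ν)| := by
        rw [integral_sub hX₁ hXR, integral_fun_fst (fun a => f (X a)), probReal_univ, one_smul]
    _ ≤ ∫ p, K * (|X p.1| * |R p.2 - 1|) ∂(μ.prod ν) :=
        norm_integral_le_of_norm_le (f := fun p => f (X p.1) - f (X p.1 * R p.2)) hbound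
          (ae_of_all _ hpoint)
    _ = K * ((∫ a, |X a| ∂μ) * ∫ b, |R b - 1| ∂ν) := by
        rw [integral_const_mul, integral_prod_mul (fun a => |X a|) fun b => |R b - 1|]

theorem integral_abs_sub_integral_le_sqrt_variance {μ : Measure α} [IsProbabilityMeasure μ]
    {X : α → ℝ} (hX : MemLp X 2 μ) : ∫ a, |X a - μ[X]| ∂μ ≤ √(Var[X; μ]) := by
  have hdev : MemLp (fun a => |X a - μ[X]|) 2 μ := (hX.sub (memLp_const _)).abs
  refine Real.le_sqrt_of_sq_le ?_
  have hvar := variance_nonneg (fun a => |X a - μ[X]|) μ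
  rw [variance_eq_sub hdev] at hvar
  rw [variance_eq_integral hX.aemeasurable]
  simpa [sq_abs] using hvar

end Integral

section RotationInvariant

theorem exists_linearIsometryEquiv_apply_eq_of_norm_eq {E : Type*} [NormedAddCommGroup E]
    [InnerProductSpace ℝ E] {v w : E} (h : ‖v‖ = ‖w‖) :
    ∃ T : E ≃ₗᵢ[ℝ] E, T v = w :=
  ⟨(ℝ ∙ (v - w))ᗮ.reflection, Submodule.reflection_sub h⟩

variable {E : Type*} [NormedAddCommGroup E] [InnerProductSpace ℝ E] [MeasurableSpace E]

/-- A measure on a real inner product space is rotation invariant if every surjective linear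
isometry, orientation preserving or not, preserves it. -/
def IsRotationInvariant (μ : Measure E) : Prop :=
  ∀ T : E ≃ₗᵢ[ℝ] E, μ.map T = μ

/-- The mean deviation `𝔼 |‖x‖ / √n - 1|`, in dimension `n`, of the norm from the radius `√n`.
It is only meaningful for measures with integrable norm, as it is `0` otherwise. -/
noncomputable def radialDeviation (μ : Measure E) : ℝ :=
  ∫ x, |‖x‖ / √(Module.finrank ℝ E) - 1| ∂μ

variable [BorelSpace E] [SecondCountableTopology E]

theorem IsRotationInvariant.map_inner_eq_map_norm_mul_inner {μ : Measure E}
    (hμ : IsRotationInvariant μ) {e : E} (he : ‖e‖ = 1) (v : E) :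
    μ.map (fun x => ⟪v, x⟫) = μ.map (fun x => ‖v‖ * ⟪e, x⟫) := by
  obtain ⟨T, hT⟩ : ∃ T : E ≃ₗᵢ[ℝ] E, T (‖v‖ • e) = v :=
    exists_linearIsometryEquiv_apply_eq_of_norm_eq (by simp [norm_smul, he])
  calc μ.map (fun x => ⟪v, x⟫) = (μ.map T).map (fun x => ⟪v, x⟫) := by rw [hμ T]
    _ = μ.map (fun x => ⟪v, T x⟫) := Measure.map_map (by fun_prop) (by fun_prop)
    _ = μ.map (fun x => ‖v‖ * ⟪e, x⟫) := by
        conv_lhs => rw [← hT]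
        simp_rw [T.inner_map_map, real_inner_smul_left]

theorem IsRotationInvariant.map_inner_prod {μ ν : Measure E} [SFinite μ] [SFinite ν]
    (hμ : IsRotationInvariant μ) {e : E} (he : ‖e‖ = 1) :
    (μ.prod ν).map (fun p => ⟪p.2, p.1⟫) = (μ.prod ν).map (fun p => ‖p.2‖ * ⟪e, p.1⟫) :=
  map_prod_eq_of_forall_map_eq (by fun_prop) (by fun_prop) fun y =>
    hμ.map_inner_eq_map_norm_mul_inner he y

theorem IsRotationInvariant.identDistrib_norm_mul_inner {μ ν : Measure E} [SFinite μ] [SFinite ν]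
    (hμ : IsRotationInvariant μ) (hν : IsRotationInvariant ν) {e : E} (he : ‖e‖ = 1) :
    IdentDistrib (fun p : E × E => ‖p.2‖ * ⟪e, p.1⟫) (fun p : E × E => ‖p.2‖ * ⟪e, p.1⟫)
      (μ.prod ν) (ν.prod μ) where
  aemeasurable_fst := by fun_prop
  aemeasurable_snd := by fun_prop
  map_eq := by
    rw [← hμ.map_inner_prod he, ← hν.map_inner_prod he, ← Measure.prod_swap,
      Measure.map_map (by fun_prop) measurable_swap]
    simp_rw [Function.comp_def, Prod.fst_swap, Prod.snd_swap, real_inner_comm]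

theorem IsRotationInvariant.integral_norm_mul_integral_abs_inner_comm {μ ν : Measure E} [SFinite μ]
    [SFinite ν] (hμ : IsRotationInvariant μ) (hν : IsRotationInvariant ν) {e : E} (he : ‖e‖ = 1) :
    (∫ x, |⟪e, x⟫| ∂μ) * ∫ y, ‖y‖ ∂ν = (∫ y, |⟪e, y⟫| ∂ν) * ∫ x, ‖x‖ ∂μ := by
  have habs : ∫ p, |‖p.2‖ * ⟪e, p.1⟫| ∂(μ.prod ν) = ∫ p, |‖p.2‖ * ⟪e, p.1⟫| ∂(ν.prod μ) :=
    ((hμ.identDistrib_norm_mul_inner hν he).comp measurable_abs).integral_eq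
  simp_rw [abs_mul, abs_norm, mul_comm ‖_‖] at habs
  rwa [integral_prod_mul (fun x => |⟪e, x⟫|) fun y => ‖y‖,
    integral_prod_mul (fun x => |⟪e, x⟫|) fun y => ‖y‖] at habs

theorem IsRotationInvariant.abs_integral_inner_sub_le {μ ν : Measure E} [IsProbabilityMeasure μ]
    [IsProbabilityMeasure ν] (hμ : IsRotationInvariant μ) (hν : IsRotationInvariant ν)
    (hμ_int : Integrable (fun x => x) μ) (hν_int : Integrable (fun x => x) ν) {e : E}
    (he : ‖e‖ = 1) {K : ℝ≥0} {f : ℝ → ℝ} (hf : LipschitzWith K f) :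
    |∫ x, f ⟪e, x⟫ ∂μ - ∫ y, f ⟪e, y⟫ ∂ν| ≤
      K * ((∫ x, |⟪e, x⟫| ∂μ) * radialDeviation ν + (∫ y, |⟪e, y⟫| ∂ν) * radialDeviation μ) := by
  set r : ℝ := √(Module.finrank ℝ E)
  have hrescaled (ρ τ : Measure E) [IsProbabilityMeasure ρ] [IsProbabilityMeasure τ]
      (hρ : Integrable (fun x => x) ρ) (hτ : Integrable (fun x => x) τ) :
      |∫ x, f ⟪e, x⟫ ∂ρ - ∫ p, f (⟪e, p.1⟫ * (‖p.2‖ / r)) ∂(ρ.prod τ)| ≤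
        K * ((∫ x, |⟪e, x⟫| ∂ρ) * radialDeviation τ) :=
    abs_integral_comp_sub_integral_comp_mul_prod_le hf (hρ.const_inner e) (hτ.norm.div_const r)
  have hlaw : ∫ p, f (⟪e, p.1⟫ * (‖p.2‖ / r)) ∂(μ.prod ν) =
      ∫ p, f (⟪e, p.1⟫ * (‖p.2‖ / r)) ∂(ν.prod μ) := by
    have hmeas : Measurable fun t => f (t / r) := hf.continuous.measurable.comp (by fun_prop)
    have hswap (a b : ℝ) : a * (b / r) = b * a / r := by ring
    simp_rw [hswap]
    exact ((hμ.identDistrib_norm_mul_inner hν he).comp hmeas).integral_eq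
  have hμν := hrescaled μ ν hμ_int hν_int
  have hνμ := hrescaled ν μ hν_int hμ_int
  rw [abs_sub_comm, ← hlaw] at hνμ
  rw [mul_add]
  exact (abs_sub_le _ _ _).trans (add_le_add hμν hνμ)

end RotationInvariant

section Radial

variable {E : Type*} [NormedAddCommGroup E] [InnerProductSpace ℝ E] [MeasurableSpace E]

theorem radialDeviation_nonneg (μ : Measure E) : 0 ≤ radialDeviation μ :=
  integral_nonneg fun _ => abs_nonneg _

theorem abs_integral_norm_div_sqrt_finrank_sub_one_le {μ : Measure E} [IsProbabilityMeasure μ]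
    (hμ : Integrable (fun x => x) μ) :
    |(∫ x, ‖x‖ ∂μ) / √(Module.finrank ℝ E) - 1| ≤ radialDeviation μ := by
  calc |(∫ x, ‖x‖ ∂μ) / √(Module.finrank ℝ E) - 1|
      = |∫ x, (‖x‖ / √(Module.finrank ℝ E) - 1) ∂μ| := by
        rw [integral_sub (hμ.norm.div_const _) (integrable_const 1)]
        simp [integral_div]
    _ ≤ radialDeviation μ := abs_integral_le_integral_abs

theorem abs_div_sqrt_sub_one_le {a n : ℝ} (ha : 0 ≤ a) (hn : 0 < n) :
    |a / √n - 1| ≤ |a ^ 2 - n| / n := by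
  have hdiv : 0 ≤ a / √n := by positivity
  have hfactor : (a ^ 2 - n) / n = (a / √n - 1) * (a / √n + 1) := by
    rw [sub_div, div_self hn.ne', ← Real.sq_sqrt hn.le, Real.sqrt_sq (Real.sqrt_nonneg n)]
    ring
  calc |a / √n - 1| ≤ |a / √n - 1| * |a / √n + 1| :=
        le_mul_of_one_le_right (abs_nonneg _) (by rw [abs_of_nonneg (by positivity)]; linarith)
    _ = |a ^ 2 - n| / n := by rw [← abs_mul, ← hfactor, abs_div, abs_of_pos hn]

theorem radialDeviation_le_sqrt_variance_div [FiniteDimensional ℝ E] [Nontrivial E]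
    {μ : Measure E} [IsProbabilityMeasure μ] (hmem : MemLp (fun x => ‖x‖ ^ 2) 2 μ)
    (hmean : ∫ x, ‖x‖ ^ 2 ∂μ = Module.finrank ℝ E) :
    radialDeviation μ ≤ √(Var[fun x => ‖x‖ ^ 2; μ]) / Module.finrank ℝ E := by
  have hpos : (0 : ℝ) < Module.finrank ℝ E := mod_cast Module.finrank_pos
  calc radialDeviation μ
      ≤ ∫ x, |‖x‖ ^ 2 - Module.finrank ℝ E| / Module.finrank ℝ E ∂μ :=
        integral_mono_of_nonneg (ae_of_all _ fun _ => abs_nonneg _)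
          (((hmem.integrable one_le_two).sub (integrable_const _)).abs.div_const _)
          (ae_of_all _ fun x => abs_div_sqrt_sub_one_le (norm_nonneg x) hpos)
    _ = (∫ x, |‖x‖ ^ 2 - ∫ y, ‖y‖ ^ 2 ∂μ| ∂μ) / Module.finrank ℝ E := by
        rw [integral_div, hmean]
    _ ≤ √(Var[fun x => ‖x‖ ^ 2; μ]) / Module.finrank ℝ E := by
        gcongr
        exact integral_abs_sub_integral_le_sqrt_variance hmem

end Radial

section StdGaussian

theorem memLp_two_sq_gaussianReal (m : ℝ) (v : ℝ≥0) :
    MemLp (fun t : ℝ => t ^ 2) 2 (gaussianReal m v) := by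
  have h4 : MemLp (fun t : ℝ => t) 4 (gaussianReal m v) := memLp_id_gaussianReal' 4 (by simp)
  rw [memLp_two_iff_integrable_sq (by fun_prop)]
  refine (h4.integrable_norm_pow (p := 4) (by simp)).congr (ae_of_all _ fun t => ?_)
  simp only [Real.norm_eq_abs, Even.pow_abs (by decide : Even 4), ← pow_mul]

theorem integral_sq_gaussianReal_zero (v : ℝ≥0) : ∫ t, t ^ 2 ∂(gaussianReal 0 v) = v := by
  have h := variance_fun_id_gaussianReal (μ := 0) (v := v)
  rwa [variance_of_integral_eq_zero (by fun_prop) integral_id_gaussianReal] at h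

variable {E : Type*} [NormedAddCommGroup E] [InnerProductSpace ℝ E] [FiniteDimensional ℝ E]
  [MeasurableSpace E] [BorelSpace E]

theorem isRotationInvariant_stdGaussian : IsRotationInvariant (stdGaussian E) :=
  stdGaussian_map

theorem map_inner_stdGaussian {e : E} (he : ‖e‖ = 1) :
    (stdGaussian E).map (fun x => ⟪e, x⟫) = gaussianReal 0 1 := by
  have h := IsGaussian.map_eq_gaussianReal (μ := stdGaussian E) (innerSL ℝ e)
  rw [integral_strongDual_stdGaussian, variance_dual_stdGaussian, innerSL_apply_norm, he] at h
  simpa using h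

theorem integral_inner_stdGaussian {e : E} (he : ‖e‖ = 1) {f : ℝ → ℝ} (hf : Continuous f) :
    ∫ x, f ⟪e, x⟫ ∂(stdGaussian E) = ∫ t, f t ∂(gaussianReal 0 1) := by
  rw [← map_inner_stdGaussian he, integral_map (by fun_prop) hf.aestronglyMeasurable]

variable (E) in
theorem identDistrib_norm_sq_stdGaussian :
    IdentDistrib (fun x => ‖x‖ ^ 2) (∑ i, fun t => t i ^ 2) (stdGaussian E)
      (Measure.pi fun _ : Fin (Module.finrank ℝ E) => gaussianReal 0 1) where
  aemeasurable_fst := by fun_prop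
  aemeasurable_snd := by fun_prop
  map_eq := by
    rw [stdGaussian, Measure.map_map (by fun_prop) (by fun_prop)]
    congr 1
    ext t
    rw [Function.comp_apply, ← (stdOrthonormalBasis ℝ E).sum_sq_inner_right, Finset.sum_apply]
    simp_rw [(stdOrthonormalBasis ℝ E).orthonormal.inner_right_fintype]

theorem memLp_sq_eval_pi_gaussianReal {ι : Type*} [Fintype ι] (i : ι) :
    MemLp (fun t : ι → ℝ => t i ^ 2) 2 (Measure.pi fun _ => gaussianReal 0 1) :=
  (memLp_two_sq_gaussianReal 0 1).comp_measurePreserving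
    (measurePreserving_eval (fun _ : ι => gaussianReal 0 1) i)

variable (E) in
theorem memLp_norm_sq_stdGaussian : MemLp (fun x => ‖x‖ ^ 2) 2 (stdGaussian E) :=
  (identDistrib_norm_sq_stdGaussian E).memLp_iff.2
    (memLp_finsetSum' _ fun i _ => memLp_sq_eval_pi_gaussianReal i)

variable (E) in
theorem integral_norm_sq_stdGaussian :
    ∫ x, ‖x‖ ^ 2 ∂(stdGaussian E) = Module.finrank ℝ E := by
  have hcoord (i : Fin (Module.finrank ℝ E)) :
      ∫ t, t i ^ 2 ∂(Measure.pi fun _ : Fin (Module.finrank ℝ E) => gaussianReal 0 1) = 1 := by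
    rw [integral_comp_eval (X := fun _ => ℝ) (f := fun s : ℝ => s ^ 2) (by fun_prop),
      integral_sq_gaussianReal_zero, NNReal.coe_one]
  rw [(identDistrib_norm_sq_stdGaussian E).integral_eq]
  simp_rw [Finset.sum_apply]
  rw [integral_finsetSum _ fun i _ => (memLp_sq_eval_pi_gaussianReal i).integrable one_le_two]
  simp [hcoord]

variable (E) in
theorem variance_norm_sq_stdGaussian :
    Var[fun x => ‖x‖ ^ 2; stdGaussian E] =
      Module.finrank ℝ E * Var[fun t => t ^ 2; gaussianReal 0 1] := by
  rw [(identDistrib_norm_sq_stdGaussian E).variance_eq,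
    variance_sum_pi (X := fun _ t => t ^ 2) fun _ => memLp_two_sq_gaussianReal 0 1]
  simp

variable (E) in
theorem radialDeviation_stdGaussian_le [Nontrivial E] :
    radialDeviation (stdGaussian E) ≤
      √(Var[fun t => t ^ 2; gaussianReal 0 1]) / √(Module.finrank ℝ E) := by
  have h := radialDeviation_le_sqrt_variance_div (memLp_norm_sq_stdGaussian E)
    (integral_norm_sq_stdGaussian E)
  rwa [variance_norm_sq_stdGaussian, Real.sqrt_mul (Nat.cast_nonneg _), mul_comm, mul_div_assoc,
    Real.sqrt_div_self, ← div_eq_mul_inv] at h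

end StdGaussian

section Limit

variable {ι : Type*} {l : Filter ι} {E : ι → Type*} [∀ i, NormedAddCommGroup (E i)]
  [∀ i, InnerProductSpace ℝ (E i)] [∀ i, MeasurableSpace (E i)]

theorem tendsto_integral_norm_div_sqrt_finrank {μ : ∀ i, Measure (E i)}
    [∀ i, IsProbabilityMeasure (μ i)] (hint : ∀ i, Integrable (fun x => x) (μ i))
    (hrad : Tendsto (fun i => radialDeviation (μ i)) l (𝓝 0)) :
    Tendsto (fun i => (∫ x, ‖x‖ ∂(μ i)) / √(Module.finrank ℝ (E i))) l (𝓝 1) :=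
  tendsto_iff_norm_sub_tendsto_zero.2 <| squeeze_zero (fun _ => norm_nonneg _)
    (fun i => abs_integral_norm_div_sqrt_finrank_sub_one_le (hint i)) hrad

variable [∀ i, FiniteDimensional ℝ (E i)] [∀ i, BorelSpace (E i)]

theorem tendsto_radialDeviation_stdGaussian
    (hdim : Tendsto (fun i => Module.finrank ℝ (E i)) l atTop) :
    Tendsto (fun i => radialDeviation (stdGaussian (E i))) l (𝓝 0) := by
  have hbound : Tendsto (fun i => √(Var[fun t => t ^ 2; gaussianReal 0 1]) /
      √(Module.finrank ℝ (E i))) l (𝓝 0) :=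
    (Real.tendsto_sqrt_atTop.comp (tendsto_natCast_atTop_atTop.comp hdim)).const_div_atTop _
  refine squeeze_zero' (.of_forall fun i => radialDeviation_nonneg _) ?_ hbound
  filter_upwards [hdim.eventually_gt_atTop 0] with i hi
  have := Module.finrank_pos_iff.1 hi
  exact radialDeviation_stdGaussian_le (E i)

variable {σ : ∀ i, Measure (E i)} [∀ i, IsProbabilityMeasure (σ i)] {e : ∀ i, E i}

theorem tendsto_integral_abs_inner_of_isRotationInvariant
    (hdim : Tendsto (fun i => Module.finrank ℝ (E i)) l atTop)
    (hinv : ∀ i, IsRotationInvariant (σ i)) (hint : ∀ i, Integrable (fun x => x) (σ i))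
    (hrad : Tendsto (fun i => radialDeviation (σ i)) l (𝓝 0)) (he : ∀ i, ‖e i‖ = 1) :
    Tendsto (fun i => ∫ x, |⟪e i, x⟫| ∂(σ i)) l (𝓝 (∫ t, |t| ∂(gaussianReal 0 1))) := by
  have hσ := tendsto_integral_norm_div_sqrt_finrank hint hrad
  have hγ := tendsto_integral_norm_div_sqrt_finrank (fun i => IsGaussian.integrable_id)
    (tendsto_radialDeviation_stdGaussian hdim)
  have hratio := (hσ.div hγ one_ne_zero).const_mul (∫ t, |t| ∂(gaussianReal 0 1))
  rw [div_one, mul_one] at hratio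
  refine hratio.congr' ?_
  filter_upwards [hγ.eventually_ne one_ne_zero] with i hne
  have hcomm := (hinv i).integral_norm_mul_integral_abs_inner_comm
    isRotationInvariant_stdGaussian (he i)
  rw [integral_inner_stdGaussian (he i) continuous_abs] at hcomm
  have hmean := (div_ne_zero_iff.1 hne).1
  have hsqrt := (div_ne_zero_iff.1 hne).2
  rw [Pi.div_apply, div_div_div_cancel_right₀ hsqrt, mul_div_assoc', ← hcomm,
    mul_div_cancel_right₀ _ hmean]

theorem tendsto_integral_inner_of_lipschitzWith
    (hdim : Tendsto (fun i => Module.finrank ℝ (E i)) l atTop)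
    (hinv : ∀ i, IsRotationInvariant (σ i)) (hint : ∀ i, Integrable (fun x => x) (σ i))
    (hrad : Tendsto (fun i => radialDeviation (σ i)) l (𝓝 0)) (he : ∀ i, ‖e i‖ = 1)
    {K : ℝ≥0} {f : ℝ → ℝ} (hf : LipschitzWith K f) :
    Tendsto (fun i => ∫ x, f ⟪e i, x⟫ ∂(σ i)) l (𝓝 (∫ t, f t ∂(gaussianReal 0 1))) := by
  set b := ∫ t, |t| ∂(gaussianReal 0 1)
  have habs : Tendsto (fun i => ∫ x, |⟪e i, x⟫| ∂(σ i)) l (𝓝 b) :=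
    tendsto_integral_abs_inner_of_isRotationInvariant hdim hinv hint hrad he
  have hbound : Tendsto (fun i => K * ((∫ x, |⟪e i, x⟫| ∂(σ i)) *
      radialDeviation (stdGaussian (E i)) + b * radialDeviation (σ i))) l (𝓝 0) := by
    simpa using ((habs.mul (tendsto_radialDeviation_stdGaussian hdim)).add
      (hrad.const_mul b)).const_mul (K : ℝ)
  refine tendsto_iff_norm_sub_tendsto_zero.2 (squeeze_zero (fun _ => norm_nonneg _) ?_ hbound)
  intro i
  have h := (hinv i).abs_integral_inner_sub_le isRotationInvariant_stdGaussian (hint i)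
    IsGaussian.integrable_id (he i) hf
  rwa [integral_inner_stdGaussian (he i) hf.continuous,
    integral_inner_stdGaussian (he i) continuous_abs] at h

theorem stmt_3_general [l.IsCountablyGenerated]
    (hdim : Tendsto (fun i => Module.finrank ℝ (E i)) l atTop)
    (hinv : ∀ i, IsRotationInvariant (σ i)) (hint : ∀ i, Integrable (fun x => x) (σ i))
    (hrad : Tendsto (fun i => radialDeviation (σ i)) l (𝓝 0)) (he : ∀ i, ‖e i‖ = 1)
    (f : ℝ →ᵇ ℝ) :
    Tendsto (fun i => ∫ x, f ⟪e i, x⟫ ∂(σ i)) l (𝓝 (∫ t, f t ∂(gaussianReal 0 1))) := by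
  let law (i : ι) : ProbabilityMeasure ℝ :=
    ⟨(σ i).map fun x => ⟪e i, x⟫, Measure.isProbabilityMeasure_map (by fun_prop)⟩
  let gaussian : ProbabilityMeasure ℝ := ⟨gaussianReal 0 1, inferInstance⟩
  have hlaw {g : ℝ → ℝ} (hg : Continuous g) (i : ι) :
      ∫ t, g t ∂(law i : Measure ℝ) = ∫ x, g ⟪e i, x⟫ ∂(σ i) :=
    integral_map (by fun_prop) hg.aestronglyMeasurable
  have hweak : Tendsto law l (𝓝 gaussian) := by
    refine tendsto_iff_forall_lipschitz_integral_tendsto.2 fun g _ ⟨K, hg⟩ => ?_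
    simp_rw [hlaw hg.continuous]
    exact tendsto_integral_inner_of_lipschitzWith hdim hinv hint hrad he hg
  exact (ProbabilityMeasure.tendsto_iff_forall_integral_tendsto.1 hweak f).congr
    (hlaw f.continuous)

end Limit

section Sphere

theorem ae_norm_eq_of_sphere_eq_one {E : Type*} [SeminormedAddCommGroup E] [MeasurableSpace E]
    [OpensMeasurableSpace E] {μ : Measure E} [IsProbabilityMeasure μ] {r : ℝ}
    (h : μ (Metric.sphere 0 r) = 1) : ∀ᵐ x ∂μ, ‖x‖ = r := by
  filter_upwards [(mem_ae_iff_prob_eq_one Metric.isClosed_sphere.measurableSet).2 h] with x hx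
  exact mem_sphere_zero_iff_norm.1 hx

theorem radialDeviation_eq_zero {E : Type*} [NormedAddCommGroup E] [InnerProductSpace ℝ E]
    [FiniteDimensional ℝ E] [Nontrivial E] [MeasurableSpace E] {μ : Measure E}
    (h : ∀ᵐ x ∂μ, ‖x‖ = √(Module.finrank ℝ E)) : radialDeviation μ = 0 := by
  refine integral_eq_zero_of_ae (h.mono fun x hx => ?_)
  have hpos : 0 < √(Module.finrank ℝ E : ℝ) := Real.sqrt_pos.2 (mod_cast Module.finrank_pos)
  simp [hx, hpos.ne']

end Sphere

/-- Poincaré's lemma (Mehler, Borel): if `σ_n` is the uniform probability measure on the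
sphere of radius `√n` in `ℝ^n` (the normalized rotation-invariant measure, characterized
as a probability measure carried by the sphere and invariant under every linear isometry),
then the pushforward of `σ_n` under the first coordinate `x ↦ x₁` converges weakly to the
standard Gaussian `N(0,1)`: integrals of every bounded continuous function converge. -/
theorem stmt_3
    (σ : ∀ n : ℕ, Measure (EuclideanSpace ℝ (Fin (n + 1))))
    (hprob : ∀ n, IsProbabilityMeasure (σ n))
    (hsupp : ∀ n, σ n (Metric.sphere (0 : EuclideanSpace ℝ (Fin (n + 1)))
      (Real.sqrt (n + 1))) = 1)
    (hinv : ∀ n (T : EuclideanSpace ℝ (Fin (n + 1)) ≃ₗᵢ[ℝ] EuclideanSpace ℝ (Fin (n + 1))),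
      (σ n).map T = σ n) :
    ∀ f : BoundedContinuousFunction ℝ ℝ,
      Tendsto (fun n : ℕ => ∫ x, f (x 0) ∂(σ n)) atTop
        (nhds (∫ y, f y ∂(gaussianReal 0 1))) := by
  have hnorm (n : ℕ) : ∀ᵐ x ∂(σ n), ‖x‖ = √(n + 1) := ae_norm_eq_of_sphere_eq_one (hsupp n)
  have hint n : Integrable (fun x => x) (σ n) :=
    .of_bound (by fun_prop) _ ((hnorm n).mono fun _ hx => hx.le)
  have hrad n : radialDeviation (σ n) = 0 := radialDeviation_eq_zero (by simpa using hnorm n)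
  have hdim : Tendsto (fun n => Module.finrank ℝ (EuclideanSpace ℝ (Fin (n + 1)))) atTop atTop := by
    simpa using tendsto_add_atTop_nat 1
  intro f
  have he n : ‖EuclideanSpace.single (0 : Fin (n + 1)) (1 : ℝ)‖ = 1 := by simp
  simpa [EuclideanSpace.inner_single_left] using
    stmt_3_general hdim hinv hint (by simp [hrad]) he f
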